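/- Let X be a compact metric space, φ : ℝ × X → X a continuous flow, and f ∈ C(X, ℝ); assume the topological pressure P(g) is finite for every g ∈ C(X, ℝ). Fix ε > 0 and let (t_n)_{n≥0} be times with t_n ≥ n and (E_n)_{n≥0} finite nonempty (t_n, ε)-separated subsets of X such that liminf_{n→∞} (1/t_n) log Σ_{x∈E_n} exp(∫₀^{t_n} f(φ^s x) ds) ≥ P(f). Define the probability measures μ_n := ( Σ_{x∈E_n} exp(∫₀^{t_n} f(φ^s x) ds) · δ_{t_n}(x) ) / ( Σ_{x∈E_n} exp(∫₀^{t_n} f(φ^s x) ds) ) on X. Then every weak limit μ of the sequence (μ_n) is φ-invariant and satisfies J_f(μ) = 0. -/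

import Mathlib

open MeasureTheory Filter Topology ENNReal NNReal

/-- `E` is a `(t, ε)`-separated set for the flow `φ`: distinct points of `E` are moved at
distance `> ε` apart at some time `s ∈ [0, t]`. -/
def IsSeparatedSet {X : Type*} [MetricSpace X] (φ : ℝ → C(X, X)) (t ε : ℝ) (E : Set X) : Prop :=
  ∀ x ∈ E, ∀ y ∈ E, x ≠ y → ∃ s ∈ Set.Icc (0 : ℝ) t, ε < dist (φ s x) (φ s y)

/-- The topological pressure of a continuous function `f` for the flow `φ`, with values in
`[-∞, ∞]`. -/
noncomputable def pressure {X : Type*} [MetricSpace X] (φ : ℝ → C(X, X)) (f : C(X, ℝ)) : EReal :=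
  ⨆ (ε : ℝ) (_ : 0 < ε),
    Filter.limsup (fun t : ℝ =>
      ((1 / t : ℝ) : EReal) *
        ENNReal.log (⨆ (E : Finset X) (_ : IsSeparatedSet φ t ε (E : Set X)),
          ENNReal.ofReal (∑ x ∈ E, Real.exp (∫ s in (0 : ℝ)..t, f (φ s x))))) Filter.atTop

/-- The rate functional `J_f(μ) = sup_ω (∫ ω dμ - Q_f(ω))` where
`Q_f(ω) = P(f + ω) - P(f)`. -/
noncomputable def Jfun {X : Type*} [MetricSpace X] [MeasurableSpace X]
    (φ : ℝ → C(X, X)) (f : C(X, ℝ)) (μ : ProbabilityMeasure X) : EReal :=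
  ⨆ ω : C(X, ℝ), (((∫ x, ω x ∂(μ : Measure X)) : ℝ) : EReal) -
    (pressure φ (f + ω) - pressure φ f)

/-- The empirical measure `δ_t(x)` of the flow `φ`: the normalized occupation measure of
the orbit segment `{φ^s x : s ∈ (0, t]}`, so that
`∫ ω dδ_t(x) = (1/t) ∫₀ᵗ ω(φ^s x) ds`. -/
noncomputable def empDist {X : Type*} [MetricSpace X] [MeasurableSpace X]
    (φ : ℝ → C(X, X)) (t : ℝ) (x : X) : Measure X :=
  (ENNReal.ofReal t)⁻¹ • Measure.map (fun s => φ s x) (volume.restrict (Set.Ioc 0 t))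

/-!
Write `S_t f(x) = ∫₀ᵗ f(φ^s x) ds`. Invariance holds because `S_t (ω ∘ φ^s - ω)` only sees the two
ends of the orbit segment and so is bounded uniformly in `t`, while empirical averages carry a
factor `1/t`.

For the rate functional, `μ_n` is the average of the measures `δ_{t_n}(x)` with weights
`exp (S_{t_n} f(x))`, so Jensen's inequality for `exp` gives
`(1/t_n) log ∑ exp (S_{t_n} f) + ∫ ω dμ_n ≤ (1/t_n) log ∑ exp (S_{t_n} (f + ω))`.
Since the sets `E_n` are separated, in the limit this becomes `P(f) + ∫ ω dμ ≤ P(f + ω)` for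
every `ω`, that is, `μ` is a subgradient of the pressure at `f`.
-/

theorem log_sum_exp_add_centerMass_le {ι : Type*} {s : Finset ι} (hs : s.Nonempty) (a b : ι → ℝ) :
    Real.log (∑ i ∈ s, Real.exp (a i)) + s.centerMass (fun i => Real.exp (a i)) b ≤
      Real.log (∑ i ∈ s, Real.exp (a i + b i)) := by
  have hpos (c : ι → ℝ) : 0 < ∑ i ∈ s, Real.exp (c i) :=
    Finset.sum_pos (fun i _ => by positivity) hs
  have jensen := convexOn_exp.map_centerMass_le (t := s) (w := fun i => Real.exp (a i)) (p := b)
    (fun i _ => by positivity) (hpos a) (fun i _ => Set.mem_univ _)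
  rw [Real.le_log_iff_exp_le (hpos _), Real.exp_add, Real.exp_log (hpos a)]
  simp only [Real.exp_add, ← le_inv_mul_iff₀ (hpos a)]
  simpa [Finset.centerMass] using jensen

section Orbit

variable {X : Type*} [MetricSpace X] {φ : ℝ → C(X, X)}

/-- The Birkhoff integral `S_t f(x) = ∫₀ᵗ f(φ^s x) ds` of `f` along the orbit of `x`. -/
noncomputable def birkhoffIntegral (φ : ℝ → C(X, X)) (f : C(X, ℝ)) (t : ℝ) (x : X) : ℝ :=
  ∫ s in (0 : ℝ)..t, f (φ s x)

/-- The unnormalized Gibbs weight `exp (S_t f(x))` of `x` at time `t`. -/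
noncomputable def gibbsWeight (φ : ℝ → C(X, X)) (f : C(X, ℝ)) (t : ℝ) (x : X) : ℝ :=
  Real.exp (birkhoffIntegral φ f t x)

/-- The partition sum `∑_{x ∈ E} exp (S_t f(x))`. -/
noncomputable def partitionSum (φ : ℝ → C(X, X)) (f : C(X, ℝ)) (t : ℝ) (E : Finset X) : ℝ :=
  ∑ x ∈ E, gibbsWeight φ f t x

theorem gibbsWeight_pos (f : C(X, ℝ)) (t : ℝ) (x : X) : 0 < gibbsWeight φ f t x :=
  Real.exp_pos _

theorem partitionSum_pos (f : C(X, ℝ)) (t : ℝ) {E : Finset X} (hE : E.Nonempty) :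
    0 < partitionSum φ f t E :=
  Finset.sum_pos (fun x _ => gibbsWeight_pos f t x) hE

theorem continuous_orbit (hφ : Continuous fun p : ℝ × X => φ p.1 p.2) (x : X) :
    Continuous fun s => φ s x :=
  hφ.comp (Continuous.prodMk_left x)

theorem intervalIntegrable_orbit (hφ : Continuous fun p : ℝ × X => φ p.1 p.2) (f : C(X, ℝ))
    (x : X) (a b : ℝ) : IntervalIntegrable (fun s => f (φ s x)) volume a b :=
  (f.continuous.comp (continuous_orbit hφ x)).intervalIntegrable a b

theorem birkhoffIntegral_add (hφ : Continuous fun p : ℝ × X => φ p.1 p.2) (f g : C(X, ℝ)) (t : ℝ)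
    (x : X) :
    birkhoffIntegral φ (f + g) t x = birkhoffIntegral φ f t x + birkhoffIntegral φ g t x :=
  intervalIntegral.integral_add (intervalIntegrable_orbit hφ f x 0 t)
    (intervalIntegrable_orbit hφ g x 0 t)

theorem birkhoffIntegral_comp_sub (hφ : Continuous fun p : ℝ × X => φ p.1 p.2)
    (hφadd : ∀ s t : ℝ, φ (s + t) = (φ s).comp (φ t)) (f : C(X, ℝ)) (s t : ℝ) (x : X) :
    birkhoffIntegral φ (f.comp (φ s) - f) t x =
      (∫ r in s..0, f (φ r x)) - ∫ r in (s + t)..t, f (φ r x) := by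
  have hint := intervalIntegrable_orbit hφ f x
  have hshift : ∫ r in (0 : ℝ)..t, f.comp (φ s) (φ r x) = ∫ r in s..(s + t), f (φ r x) := by
    simpa [hφadd] using
      intervalIntegral.integral_comp_add_left (a := 0) (b := t) (fun r => f (φ r x)) s
  calc birkhoffIntegral φ (f.comp (φ s) - f) t x
      = (∫ r in (0 : ℝ)..t, f.comp (φ s) (φ r x)) - ∫ r in (0 : ℝ)..t, f (φ r x) :=
        intervalIntegral.integral_sub (intervalIntegrable_orbit hφ _ x 0 t) (hint 0 t)
    _ = (∫ r in s..(s + t), f (φ r x)) - ∫ r in (0 : ℝ)..t, f (φ r x) := by rw [hshift]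
    _ = (∫ r in s..0, f (φ r x)) - ∫ r in (s + t)..t, f (φ r x) :=
        intervalIntegral.integral_interval_sub_interval_comm (hint _ _) (hint _ _) (hint _ _)

theorem abs_birkhoffIntegral_comp_sub_le [CompactSpace X]
    (hφ : Continuous fun p : ℝ × X => φ p.1 p.2)
    (hφadd : ∀ s t : ℝ, φ (s + t) = (φ s).comp (φ t)) (f : C(X, ℝ)) (s t : ℝ) (x : X) :
    |birkhoffIntegral φ (f.comp (φ s) - f) t x| ≤ 2 * |s| * ‖f‖ := by
  have hbound (a b : ℝ) : |∫ r in a..b, f (φ r x)| ≤ ‖f‖ * |b - a| :=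
    intervalIntegral.norm_integral_le_of_norm_le_const fun r _ => f.norm_coe_le_norm _
  calc |birkhoffIntegral φ (f.comp (φ s) - f) t x|
      = |(∫ r in s..0, f (φ r x)) - ∫ r in (s + t)..t, f (φ r x)| := by
        rw [birkhoffIntegral_comp_sub hφ hφadd]
    _ ≤ |∫ r in s..0, f (φ r x)| + |∫ r in (s + t)..t, f (φ r x)| := abs_sub _ _
    _ ≤ ‖f‖ * |0 - s| + ‖f‖ * |t - (s + t)| := add_le_add (hbound _ _) (hbound _ _)
    _ = 2 * |s| * ‖f‖ := by
        rw [zero_sub, sub_add_cancel_right, abs_neg]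
        ring

theorem log_partitionSum_add_centerMass_le (hφ : Continuous fun p : ℝ × X => φ p.1 p.2)
    (f ω : C(X, ℝ)) (t : ℝ) {E : Finset X} (hE : E.Nonempty) :
    Real.log (partitionSum φ f t E) + E.centerMass (gibbsWeight φ f t) (birkhoffIntegral φ ω t) ≤
      Real.log (partitionSum φ (f + ω) t E) := by
  have jensen :=
    log_sum_exp_add_centerMass_le hE (birkhoffIntegral φ f t) (birkhoffIntegral φ ω t)
  simp only [← birkhoffIntegral_add hφ] at jensen
  exact jensen

theorem coe_log_partitionSum_le_log_iSup (f : C(X, ℝ)) {t ε : ℝ} {E : Finset X} (hE : E.Nonempty)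
    (hsep : IsSeparatedSet φ t ε (E : Set X)) :
    (Real.log (partitionSum φ f t E) : EReal) ≤
      ENNReal.log (⨆ (F : Finset X) (_ : IsSeparatedSet φ t ε (F : Set X)),
        ENNReal.ofReal (partitionSum φ f t F)) := by
  rw [← ENNReal.log_ofReal_of_pos (partitionSum_pos f t hE)]
  exact ENNReal.log_monotone (le_iSup₂_of_le E hsep le_rfl)

theorem limsup_log_partitionSum_le_pressure (f : C(X, ℝ)) {ι : Type*} {l : Filter ι} {t : ι → ℝ}
    (ht : Tendsto t l atTop) {ε : ℝ} (hε : 0 < ε) {E : ι → Finset X} (hE : ∀ i, (E i).Nonempty)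
    (hsep : ∀ i, IsSeparatedSet φ (t i) ε (E i : Set X)) :
    limsup (fun i => ((1 / t i : ℝ) : EReal) * (Real.log (partitionSum φ f (t i) (E i)) : EReal)) l
      ≤ pressure φ f := by
  let u (r : ℝ) : EReal := ((1 / r : ℝ) : EReal) *
    ENNReal.log (⨆ (F : Finset X) (_ : IsSeparatedSet φ r ε (F : Set X)),
      ENNReal.ofReal (partitionSum φ f r F))
  calc limsup (fun i =>
        ((1 / t i : ℝ) : EReal) * (Real.log (partitionSum φ f (t i) (E i)) : EReal)) l
      ≤ limsup (u ∘ t) l := by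
        refine limsup_le_limsup ?_
        filter_upwards [ht.eventually_ge_atTop 0] with i hi
        exact mul_le_mul_of_nonneg_left (coe_log_partitionSum_le_log_iSup f (hE i) (hsep i))
          (EReal.coe_nonneg.2 (by positivity))
    _ ≤ limsup u atTop := ht.limsup_comp_le_limsup
    _ ≤ pressure φ f := le_iSup₂_of_le ε hε le_rfl

end Orbit

section EmpiricalMeasure

variable {X : Type*} [MetricSpace X] [MeasurableSpace X] {φ : ℝ → C(X, X)}

/-- The average of the empirical measures `δ_t(x)`, `x ∈ E`, with weights proportional to `w x`.
With the weights `gibbsWeight φ f t` these are the measures `μ_n` of the paper. -/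
noncomputable def weightedEmpDist (φ : ℝ → C(X, X)) (t : ℝ) (w : X → ℝ) (E : Finset X) :
    Measure X :=
  (ENNReal.ofReal (∑ x ∈ E, w x))⁻¹ • ∑ x ∈ E, ENNReal.ofReal (w x) • empDist φ t x

instance isFiniteMeasure_empDist (t : ℝ) (x : X) : IsFiniteMeasure (empDist φ t x) := by
  rcases le_or_gt t 0 with ht | ht
  · simp only [empDist, Set.Ioc_eq_empty ht.not_gt, Measure.restrict_empty, Measure.map_zero,
      smul_zero]
    infer_instance
  · exact Measure.smul_finite _ (by simpa using ht)

variable [BorelSpace X]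

theorem integral_empDist (hφ : Continuous fun p : ℝ × X => φ p.1 p.2) (ω : C(X, ℝ)) {t : ℝ}
    (ht : 0 ≤ t) (x : X) : ∫ y, ω y ∂(empDist φ t x) = t⁻¹ * birkhoffIntegral φ ω t x := by
  rw [empDist, integral_smul_measure, integral_map (continuous_orbit hφ x).measurable.aemeasurable
    ω.continuous.aestronglyMeasurable, birkhoffIntegral, intervalIntegral.integral_of_le ht,
    ENNReal.toReal_inv, ENNReal.toReal_ofReal ht, smul_eq_mul]

variable [CompactSpace X]

theorem integral_weightedEmpDist (hφ : Continuous fun p : ℝ × X => φ p.1 p.2) (ω : C(X, ℝ)) {t : ℝ}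
    (ht : 0 ≤ t) {w : X → ℝ} {E : Finset X} (hw : ∀ x ∈ E, 0 ≤ w x) :
    ∫ y, ω y ∂(weightedEmpDist φ t w E) = t⁻¹ * E.centerMass w (birkhoffIntegral φ ω t) := by
  have hint : ∀ x ∈ E, Integrable ω (ENNReal.ofReal (w x) • empDist φ t x) := fun x _ =>
    ((BoundedContinuousFunction.mkOfCompact ω).integrable _).smul_measure ENNReal.ofReal_ne_top
  have hterm : ∀ x ∈ E, ∫ y, ω y ∂(ENNReal.ofReal (w x) • empDist φ t x) =
      w x • t⁻¹ • birkhoffIntegral φ ω t x := fun x hx => by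
    rw [integral_smul_measure, ENNReal.toReal_ofReal (hw x hx), integral_empDist hφ ω ht,
      smul_eq_mul t⁻¹]
  rw [weightedEmpDist, integral_smul_measure, integral_finsetSum_measure hint,
    Finset.sum_congr rfl hterm, ENNReal.toReal_inv, ENNReal.toReal_ofReal (Finset.sum_nonneg hw),
    ← smul_eq_mul t⁻¹, ← Finset.centerMass_smul, Finset.centerMass]

theorem abs_integral_comp_sub_weightedEmpDist_le (hφ : Continuous fun p : ℝ × X => φ p.1 p.2)
    (hφadd : ∀ s t : ℝ, φ (s + t) = (φ s).comp (φ t)) (ω : C(X, ℝ)) (s : ℝ) {t : ℝ} (ht : 0 ≤ t)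
    {w : X → ℝ} {E : Finset X} (hw : ∀ x ∈ E, 0 ≤ w x) (hpos : 0 < ∑ x ∈ E, w x) :
    |∫ y, (ω.comp (φ s) - ω) y ∂(weightedEmpDist φ t w E)| ≤ t⁻¹ * (2 * |s| * ‖ω‖) := by
  rw [integral_weightedEmpDist hφ _ ht hw, abs_mul, abs_of_nonneg (inv_nonneg.2 ht)]
  gcongr
  simpa using (convex_closedBall (0 : ℝ) (2 * |s| * ‖ω‖)).centerMass_mem hw hpos
    (fun x _ => by simpa using abs_birkhoffIntegral_comp_sub_le hφ hφadd ω s t x)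

theorem log_partitionSum_add_integral_le (hφ : Continuous fun p : ℝ × X => φ p.1 p.2)
    (f ω : C(X, ℝ)) {t : ℝ} (ht : 0 ≤ t) {E : Finset X} (hE : E.Nonempty) :
    1 / t * Real.log (partitionSum φ f t E) +
        ∫ y, ω y ∂(weightedEmpDist φ t (gibbsWeight φ f t) E) ≤
      1 / t * Real.log (partitionSum φ (f + ω) t E) := by
  rw [integral_weightedEmpDist hφ ω ht fun x _ => (gibbsWeight_pos f t x).le, one_div, ← mul_add]
  gcongr
  exact log_partitionSum_add_centerMass_le hφ f ω t hE

end EmpiricalMeasure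

section WeakLimit

variable {X : Type*} [MetricSpace X] [MeasurableSpace X] {φ : ℝ → C(X, X)}

theorem Jfun_eq_zero_of_forall_pressure_add_integral_le {f : C(X, ℝ)} {p : ℝ}
    (hp : pressure φ f = p) {μ : ProbabilityMeasure X}
    (hμ : ∀ ω : C(X, ℝ),
      pressure φ f + ((∫ x, ω x ∂(μ : Measure X) : ℝ) : EReal) ≤ pressure φ (f + ω)) :
    Jfun φ f μ = 0 := by
  rw [hp] at hμ
  refine le_antisymm (iSup_le fun ω => ?_) (le_iSup_of_le 0 (by simp [hp]))
  rw [hp, EReal.sub_nonpos, EReal.le_sub_iff_add_le (by simp) (by simp), add_comm]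
  exact hμ ω

variable [CompactSpace X] [BorelSpace X]

theorem tendsto_integral_of_tendsto_probabilityMeasure {ι : Type*} {l : Filter ι}
    {μ : ι → ProbabilityMeasure X} {μlim : ProbabilityMeasure X} (hlim : Tendsto μ l (𝓝 μlim))
    (ω : C(X, ℝ)) :
    Tendsto (fun i => ∫ x, ω x ∂(μ i : Measure X)) l (𝓝 (∫ x, ω x ∂(μlim : Measure X))) :=
  ProbabilityMeasure.tendsto_iff_forall_integral_tendsto.1 hlim
    (BoundedContinuousFunction.mkOfCompact ω)

theorem integral_comp_eq_of_tendsto_weightedEmpDist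
    (hφ : Continuous fun p : ℝ × X => φ p.1 p.2)
    (hφadd : ∀ s t : ℝ, φ (s + t) = (φ s).comp (φ t)) {ι : Type*} {l : Filter ι} [l.NeBot]
    {t : ι → ℝ} (ht : Tendsto t l atTop) {w : ι → X → ℝ} {E : ι → Finset X}
    (hw : ∀ i, ∀ x ∈ E i, 0 ≤ w i x) (hpos : ∀ i, 0 < ∑ x ∈ E i, w i x)
    {μ : ι → ProbabilityMeasure X}
    (hμ : ∀ i, (μ i : Measure X) = weightedEmpDist φ (t i) (w i) (E i))
    {μlim : ProbabilityMeasure X} (hlim : Tendsto μ l (𝓝 μlim)) (ω : C(X, ℝ)) (s : ℝ) :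
    ∫ x, ω (φ s x) ∂(μlim : Measure X) = ∫ x, ω x ∂(μlim : Measure X) := by
  have hbound : ∀ᶠ i in l,
      |∫ x, (ω.comp (φ s) - ω) x ∂(μ i : Measure X)| ≤ (t i)⁻¹ * (2 * |s| * ‖ω‖) := by
    filter_upwards [ht.eventually_ge_atTop 0] with i hi
    rw [hμ i]
    exact abs_integral_comp_sub_weightedEmpDist_le hφ hφadd ω s hi (hw i) (hpos i)
  have hzero : Tendsto (fun i => (t i)⁻¹ * (2 * |s| * ‖ω‖)) l (𝓝 0) := by
    simpa using (tendsto_inv_atTop_zero.comp ht).mul_const (2 * |s| * ‖ω‖)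
  have hdiff : ∫ x, (ω.comp (φ s) - ω) x ∂(μlim : Measure X) = 0 :=
    tendsto_nhds_unique (tendsto_integral_of_tendsto_probabilityMeasure hlim _)
      (squeeze_zero_norm' hbound hzero)
  have hint (g : C(X, ℝ)) : Integrable g (μlim : Measure X) :=
    (BoundedContinuousFunction.mkOfCompact g).integrable _
  exact sub_eq_zero.1 ((integral_sub (hint (ω.comp (φ s))) (hint ω)).symm.trans hdiff)

theorem pressure_add_integral_le_of_tendsto
    (hφ : Continuous fun p : ℝ × X => φ p.1 p.2) {f : C(X, ℝ)} {ι : Type*} {l : Filter ι} [l.NeBot]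
    {t : ι → ℝ} (ht : Tendsto t l atTop) {ε : ℝ} (hε : 0 < ε) {E : ι → Finset X}
    (hE : ∀ i, (E i).Nonempty) (hsep : ∀ i, IsSeparatedSet φ (t i) ε (E i : Set X))
    (hliminf : pressure φ f ≤ liminf (fun i =>
      ((1 / t i : ℝ) : EReal) * (Real.log (partitionSum φ f (t i) (E i)) : EReal)) l)
    {μ : ι → ProbabilityMeasure X}
    (hμ : ∀ i, (μ i : Measure X) = weightedEmpDist φ (t i) (gibbsWeight φ f (t i)) (E i))
    {μlim : ProbabilityMeasure X} (hlim : Tendsto μ l (𝓝 μlim)) (ω : C(X, ℝ)) :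
    pressure φ f + ((∫ x, ω x ∂(μlim : Measure X) : ℝ) : EReal) ≤ pressure φ (f + ω) := by
  let rate (g : C(X, ℝ)) (i : ι) : EReal :=
    ((1 / t i : ℝ) : EReal) * (Real.log (partitionSum φ g (t i) (E i)) : EReal)
  let mean (i : ι) : EReal := ((∫ x, ω x ∂(μ i : Measure X) : ℝ) : EReal)
  have hmean : liminf mean l = ((∫ x, ω x ∂(μlim : Measure X) : ℝ) : EReal) :=
    (EReal.tendsto_coe.2 (tendsto_integral_of_tendsto_probabilityMeasure hlim ω)).liminf_eq
  have hjensen : ∀ᶠ i in l, (rate f + mean) i ≤ rate (f + ω) i := by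
    filter_upwards [ht.eventually_ge_atTop 0] with i hi
    have hreal := log_partitionSum_add_integral_le hφ f ω hi (hE i)
    rw [← hμ i] at hreal
    simp only [Pi.add_apply, rate, mean]
    exact_mod_cast hreal
  calc pressure φ f + ((∫ x, ω x ∂(μlim : Measure X) : ℝ) : EReal)
      ≤ liminf (rate f) l + liminf mean l := add_le_add hliminf hmean.ge
    _ ≤ liminf (rate f + mean) l := EReal.le_liminf_add
    _ ≤ liminf (rate (f + ω)) l := liminf_le_liminf hjensen
    _ ≤ limsup (rate (f + ω)) l := liminf_le_limsup
    _ ≤ pressure φ (f + ω) := limsup_log_partitionSum_le_pressure (f + ω) ht hε hE hsep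

theorem weak_limit_is_equilibrium_state_general
    (hφ : Continuous fun p : ℝ × X => φ p.1 p.2)
    (hφadd : ∀ s t : ℝ, φ (s + t) = (φ s).comp (φ t))
    {f : C(X, ℝ)} {p : ℝ} (hp : pressure φ f = p) {ι : Type*} {l : Filter ι} [l.NeBot]
    {t : ι → ℝ} (ht : Tendsto t l atTop) {ε : ℝ} (hε : 0 < ε) {E : ι → Finset X}
    (hE : ∀ i, (E i).Nonempty) (hsep : ∀ i, IsSeparatedSet φ (t i) ε (E i : Set X))
    (hliminf : pressure φ f ≤ liminf (fun i =>
      ((1 / t i : ℝ) : EReal) * (Real.log (partitionSum φ f (t i) (E i)) : EReal)) l)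
    {μ : ι → ProbabilityMeasure X}
    (hμ : ∀ i, (μ i : Measure X) = weightedEmpDist φ (t i) (gibbsWeight φ f (t i)) (E i))
    {μlim : ProbabilityMeasure X} (hlim : Tendsto μ l (𝓝 μlim)) :
    (∀ (ω : C(X, ℝ)) (s : ℝ),
        ∫ x, ω (φ s x) ∂(μlim : Measure X) = ∫ x, ω x ∂(μlim : Measure X)) ∧
      Jfun φ f μlim = 0 :=
  ⟨integral_comp_eq_of_tendsto_weightedEmpDist hφ hφadd ht
      (fun i x _ => (gibbsWeight_pos f (t i) x).le) (fun i => partitionSum_pos f (t i) (hE i))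
      hμ hlim,
    Jfun_eq_zero_of_forall_pressure_add_integral_le hp
      (pressure_add_integral_le_of_tendsto hφ ht hε hE hsep hliminf hμ hlim)⟩

end WeakLimit

/-- Let `φ` be a continuous flow on a compact metric space `X` whose
topological pressure is finite on all of `C(X,ℝ)`, and let `f ∈ C(X,ℝ)` and `ε > 0`. Let
`t_n ≥ n` be positive times and `E_n` nonempty finite `(t_n, ε)`-separated sets with
`liminf (1/t_n) log Σ_{x∈E_n} exp ∫₀^{t_n} f(φ^s x) ds ≥ P(f)`. Then every weak limit `μ`
of the probability measures
`μ_n = (Σ_{x∈E_n} e^{∫₀^{t_n} f(φ^s x) ds} δ_{t_n}(x)) / (Σ_{x∈E_n} e^{∫₀^{t_n} f(φ^s x) ds})`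
is `φ`-invariant and satisfies `J_f(μ) = 0` (hence is an equilibrium state). -/
theorem weak_limit_is_equilibrium_state
    {X : Type*} [MetricSpace X] [CompactSpace X] [MeasurableSpace X] [BorelSpace X]
    (φ : ℝ → C(X, X))
    (hφcont : Continuous fun p : ℝ × X => φ p.1 p.2)
    (hφ0 : φ 0 = ContinuousMap.id X)
    (hφadd : ∀ s t : ℝ, φ (s + t) = (φ s).comp (φ t))
    (f : C(X, ℝ))
    (hfin : ∀ g : C(X, ℝ), ∃ r : ℝ, pressure φ g = (r : EReal))
    (ε : ℝ) (hε : 0 < ε)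
    (t : ℕ → ℝ) (ht0 : ∀ n, 0 < t n) (htn : ∀ n : ℕ, (n : ℝ) ≤ t n)
    (E : ℕ → Finset X) (hEne : ∀ n, (E n).Nonempty)
    (hEsep : ∀ n, IsSeparatedSet φ (t n) ε (E n : Set X))
    (hliminf : pressure φ f ≤
      Filter.liminf (fun n : ℕ =>
        ((1 / t n : ℝ) : EReal) *
          ((Real.log (∑ x ∈ E n, Real.exp (∫ s in (0 : ℝ)..t n, f (φ s x))) : ℝ) : EReal))
        Filter.atTop)
    (μn : ℕ → ProbabilityMeasure X)
    (hμn : ∀ n, (μn n : Measure X) =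
      (ENNReal.ofReal (∑ x ∈ E n, Real.exp (∫ s in (0 : ℝ)..t n, f (φ s x))))⁻¹ •
        ∑ x ∈ E n, ENNReal.ofReal (Real.exp (∫ s in (0 : ℝ)..t n, f (φ s x))) •
          empDist φ (t n) x)
    (μlim : ProbabilityMeasure X)
    (hlim : Tendsto μn atTop (𝓝 μlim)) :
    (∀ (ω : C(X, ℝ)) (s : ℝ),
        ∫ x, ω (φ s x) ∂(μlim : Measure X) = ∫ x, ω x ∂(μlim : Measure X)) ∧
    Jfun φ f μlim = 0 := by
  obtain ⟨_, hp⟩ := hfin f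
  exact weak_limit_is_equilibrium_state_general hφcont hφadd hp
    (tendsto_atTop_mono htn tendsto_natCast_atTop_atTop) hε hEne hEsep hliminf hμn hlim
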